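/- arXiv:math/0510370 — 3 statements merged into one kernel-verified Lean document; each statement's English description precedes it below -/
import Mathlib

section
/- Suppose (z_1, …, z_k) and (w_1, …, w_m) are tuples of integers with k ≥ 2 and m ≥ 2, each of which satisfies either the positive pattern (first entry ≥ 0, all interior entries ≥ 1, last entry ≥ 2) or the negative pattern (first entry ≤ 0, all interior entries ≤ −1, last entry ≤ −2). If cf(z_1, …, z_k) = cf(w_1, …, w_m), then k = m and z_j = w_j for every j. -/
/-- The continued fraction value of a nonempty list of integers:
`cf [z₁, …, z_k] = z₁ + 1/(z₂ + 1/(⋯ + 1/z_k))`, using the convention `1/0 = 0` in `ℚ`. -/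
def cf (l : List ℤ) : ℚ := l.foldr (fun z r => (z : ℚ) + 1 / r) 0

/-- The positive pattern for a tuple `(z₁, …, z_k)` (here `0`-indexed, of length `k`):
first entry `≥ 0`, all interior entries `≥ 1`, last entry `≥ 2`. -/
def PosPattern (k : ℕ) (z : ℕ → ℤ) : Prop :=
  0 ≤ z 0 ∧ (∀ j, 0 < j → j < k - 1 → 1 ≤ z j) ∧ 2 ≤ z (k - 1)

/-- The negative pattern for a tuple `(z₁, …, z_k)` (here `0`-indexed, of length `k`):
first entry `≤ 0`, all interior entries `≤ -1`, last entry `≤ -2`. -/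
def NegPattern (k : ℕ) (z : ℕ → ℤ) : Prop :=
  z 0 ≤ 0 ∧ (∀ j, 0 < j → j < k - 1 → z j ≤ -1) ∧ z (k - 1) ≤ -2

lemma cfV_zero (z : ℕ → ℤ) : cf ((List.range 1).map z) = z 0 := by
  simp [cf]

lemma cfV_succ (n : ℕ) (z : ℕ → ℤ) : cf ((List.range (n+1)).map z) =
    z 0 + 1 / cf ((List.range n).map (fun j => z (j+1))) := by
  rw [List.range_succ_eq_map, List.map_cons, List.map_map]
  rfl

def TailPat (n : ℕ) (z : ℕ → ℤ) : Prop := (∀ j < n, 1 ≤ z j) ∧ 2 ≤ z n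

lemma TailPat.shift {n : ℕ} {z : ℕ → ℤ} (h : TailPat (n+1) z) :
    TailPat n (fun j => z (j+1)) :=
  ⟨fun j hj => h.1 (j+1) (by omega), h.2⟩

lemma cfV_gt (n : ℕ) : ∀ z : ℕ → ℤ, TailPat n z → 1 < cf ((List.range (n+1)).map z) := by
  induction n with
  | zero =>
    intro z h
    rw [cfV_zero]
    have := h.2
    exact_mod_cast (by omega : 1 < z 0)
  | succ n ih =>
    intro z h
    rw [cfV_succ]
    have h1 := ih _ h.shift
    have h2 : (1:ℚ) ≤ z 0 := by exact_mod_cast h.1 0 (by omega)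
    have : 0 < 1 / cf ((List.range (n+1)).map (fun j => z (j+1))) := by positivity
    linarith

lemma frac_bd {s : ℚ} (hs : 1 < s) : 0 < 1 / s ∧ 1 / s < 1 :=
  ⟨by positivity, by rw [div_lt_one (by linarith)]; exact hs⟩

lemma key_step {a b : ℤ} {s t : ℚ} (hs : 1 < s) (ht : 1 < t)
    (h : (a:ℚ) + 1 / s = b + 1 / t) : a = b ∧ s = t := by
  obtain ⟨h1, h2⟩ := frac_bd hs
  obtain ⟨h3, h4⟩ := frac_bd ht
  have e1 : a < b + 1 := by
    have : (a:ℚ) < b + 1 := by linarith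
    exact_mod_cast this
  have e2 : b < a + 1 := by
    have : (b:ℚ) < a + 1 := by linarith
    exact_mod_cast this
  have e : a = b := by omega
  subst e
  refine ⟨rfl, ?_⟩
  have h5 : 1 / s = 1 / t := by linarith
  simpa using h5

lemma key_ne {a b : ℤ} {t : ℚ} (ht : 1 < t) (h : (a:ℚ) = b + 1 / t) : False := by
  obtain ⟨h3, h4⟩ := frac_bd ht
  have e1 : a < b + 1 := by
    have : (a:ℚ) < b + 1 := by linarith
    exact_mod_cast this
  have e2 : b < a := by
    have : (b:ℚ) < a := by linarith
    exact_mod_cast this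
  omega

lemma tail_unique (n : ℕ) : ∀ (m : ℕ) (z w : ℕ → ℤ), TailPat n z → TailPat m w →
    cf ((List.range (n+1)).map z) = cf ((List.range (m+1)).map w) →
    n = m ∧ ∀ j < n + 1, z j = w j := by
  induction n with
  | zero =>
    intro m z w hz hw h
    cases m with
    | zero =>
      rw [cfV_zero, cfV_zero] at h
      refine ⟨rfl, fun j hj => ?_⟩
      obtain rfl : j = 0 := by omega
      exact_mod_cast h
    | succ m =>
      rw [cfV_zero, cfV_succ] at h
      exact (key_ne (cfV_gt _ _ hw.shift) h).elim
  | succ n ih =>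
    intro m z w hz hw h
    cases m with
    | zero =>
      rw [cfV_zero, cfV_succ] at h
      exact (key_ne (cfV_gt _ _ hz.shift) h.symm).elim
    | succ m =>
      rw [cfV_succ, cfV_succ (m+1)] at h
      obtain ⟨h0, h1⟩ := key_step (cfV_gt _ _ hz.shift) (cfV_gt _ _ hw.shift) h
      obtain ⟨h2, h3⟩ := ih _ _ _ hz.shift hw.shift h1
      refine ⟨by omega, fun j hj => ?_⟩
      cases j with
      | zero => exact h0
      | succ j => exact h3 j (by omega)

lemma PosPattern.tail {n : ℕ} {z : ℕ → ℤ} (h : PosPattern (n+2) z) :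
    TailPat n (fun j => z (j+1)) :=
  ⟨fun j hj => h.2.1 (j+1) (by omega) (by omega), h.2.2⟩

lemma pos_unique (n m : ℕ) (z w : ℕ → ℤ) (hz : PosPattern (n+2) z) (hw : PosPattern (m+2) w)
    (h : cf ((List.range (n+2)).map z) = cf ((List.range (m+2)).map w)) :
    n + 2 = m + 2 ∧ ∀ j < n + 2, z j = w j := by
  rw [cfV_succ, cfV_succ (m+1)] at h
  obtain ⟨h0, h1⟩ := key_step (cfV_gt _ _ hz.tail) (cfV_gt _ _ hw.tail) h
  obtain ⟨h2, h3⟩ := tail_unique _ _ _ _ hz.tail hw.tail h1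
  refine ⟨by omega, fun j hj => ?_⟩
  cases j with
  | zero => exact h0
  | succ j => exact h3 j (by omega)

lemma pos_pos (n : ℕ) (z : ℕ → ℤ) (hz : PosPattern (n+2) z) :
    0 < cf ((List.range (n+2)).map z) := by
  rw [cfV_succ]
  have h1 := (frac_bd (cfV_gt _ _ hz.tail)).1
  have h2 : (0:ℚ) ≤ z 0 := by exact_mod_cast hz.1
  linarith

lemma cf_neg (n : ℕ) : ∀ z : ℕ → ℤ, cf ((List.range n).map (fun j => - z j)) =
    - cf ((List.range n).map z) := by
  induction n with
  | zero => intro z; simp [cf]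
  | succ n ih =>
    intro z
    rw [cfV_succ, cfV_succ n z, ih (fun j => z (j+1))]
    push_cast
    rw [div_neg]
    ring

lemma NegPattern.neg {k : ℕ} {z : ℕ → ℤ} (h : NegPattern k z) :
    PosPattern k (fun j => - z j) := by
  obtain ⟨h1, h2, h3⟩ := h
  refine ⟨?_, fun j a b => ?_, ?_⟩
  · show 0 ≤ - z 0
    omega
  · have := h2 j a b
    show 1 ≤ - z j
    omega
  · show 2 ≤ - z (k-1)
    omega

theorem continued_fraction_unique (k m : ℕ) (z w : ℕ → ℤ)
    (hk : 2 ≤ k) (hm : 2 ≤ m)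
    (hz : PosPattern k z ∨ NegPattern k z)
    (hw : PosPattern m w ∨ NegPattern m w)
    (h : cf ((List.range k).map z) = cf ((List.range m).map w)) :
    k = m ∧ ∀ j < k, z j = w j := by
  obtain ⟨n, rfl⟩ := Nat.exists_eq_add_of_le' hk
  obtain ⟨m, rfl⟩ := Nat.exists_eq_add_of_le' hm
  rcases hz with hz | hz <;> rcases hw with hw | hw
  · exact pos_unique _ _ _ _ hz hw h
  · have h1 := pos_pos _ _ hz
    have h2 := pos_pos _ _ hw.neg
    rw [cf_neg] at h2
    linarith
  · have h1 := pos_pos _ _ hw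
    have h2 := pos_pos _ _ hz.neg
    rw [cf_neg] at h2
    linarith
  · obtain ⟨h1, h2⟩ := pos_unique _ _ _ _ hz.neg hw.neg (by rw [cf_neg, cf_neg, h])
    exact ⟨h1, fun j hj => neg_injective (h2 j hj)⟩
end

section
/- Let l ≥ 1 and let z_1, …, z_l be integers with z_1 ≥ 0 and z_j ≥ 1 for all 2 ≤ j ≤ l. For a rational number x with reduced form a/b (b ≥ 1), write ⟨x⟩ for the point ((b−1)/b, a/b) ∈ ℚ². Then the points ⟨cf(z_1, …, z_l, j)⟩ for j = 1, 2, 3, … all lie on a single line; precisely, writing cf(z_1, …, z_l) = p/q and cf(z_1, …, z_l, 1) = r/s in lowest terms with q, s ≥ 1, each of these points lies on the line through (1, p/q) with slope (ps − qr)/q. -/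
/-- For a rational number `x` with reduced form `a/b` (`b ≥ 1`), the point
`⟨x⟩ = ((b−1)/b, a/b)` in `ℚ²`. -/
def vertexPoint (x : ℚ) : ℚ × ℚ := (((x.den : ℚ) - 1) / (x.den : ℚ), x)

theorem cf_cons_aux (z : ℤ) (L : List ℤ) : cf (z :: L) = (z : ℚ) + 1 / cf L := rfl

theorem cf_matrix (M : List ℤ) : ∀ z : ℤ, 0 ≤ z → (∀ m ∈ M, 1 ≤ m) →
    ∃ p q p' q' : ℤ, 0 ≤ p ∧ 0 < q ∧ 0 ≤ p' ∧ 0 ≤ q' ∧ (1 ≤ z → 0 < p) ∧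
      (p * q' - p' * q) * (p * q' - p' * q) = 1 ∧ cf (z :: M) = (p : ℚ) / q ∧
      ∀ j : ℤ, 1 ≤ j → cf (z :: M ++ [j]) = ((j * p + p' : ℤ) : ℚ) / ((j * q + q' : ℤ) : ℚ) := by
  induction M with
  | nil =>
    intro z hz _
    refine ⟨z, 1, 1, 0, hz, by norm_num, by norm_num, by norm_num, by intro h; omega, by ring,
      by simp [cf], ?_⟩
    intro j hj
    have : (j : ℚ) ≠ 0 := by exact_mod_cast (by omega : j ≠ 0)
    simp [cf]
    field_simp
  | cons w M ih =>
    intro z hz hM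
    have hw : 1 ≤ w := hM w (by simp)
    obtain ⟨p, q, p', q', hp, hq, hp', hq', hpp, hdet, hcf, hj⟩ :=
      ih w (by omega) (fun m hm => hM m (by simp [hm]))
    have hp0 := hpp hw
    have hpQ : (p : ℚ) ≠ 0 := by exact_mod_cast hp0.ne'
    have hqQ : (q : ℚ) ≠ 0 := by exact_mod_cast hq.ne'
    refine ⟨z * p + q, p, z * p' + q', p', by positivity, hp0, by positivity, hp',
      fun _ => by positivity, by linear_combination hdet, ?_, ?_⟩
    · rw [cf_cons_aux, hcf]
      push_cast
      field_simp
    · intro j h1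
      have h2 : (0:ℤ) < j * p + p' := by have : 0 < j * p := by positivity
                                         omega
      have h3 : (0:ℤ) < j * q + q' := by have : 0 < j * q := by positivity
                                         omega
      have h2Q : ((j * p + p' : ℤ) : ℚ) ≠ 0 := by exact_mod_cast h2.ne'
      have h3Q : ((j * q + q' : ℤ) : ℚ) ≠ 0 := by exact_mod_cast h3.ne'
      have := hj j h1
      rw [List.cons_append, cf_cons_aux, this, one_div_div, eq_div_iff h2Q, add_mul,
        div_mul_cancel₀ _ h2Q]
      push_cast
      ring

theorem num_den_aux (a b u v : ℤ) (hb : 0 < b) (h : u * a + v * b = 1) (x : ℚ)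
    (hx : x = (a : ℚ) / b) : x.num = a ∧ (x.den : ℤ) = b := by
  have hc : IsCoprime a b := ⟨u, v, h⟩
  have hc' : Nat.Coprime a.natAbs b.natAbs := Int.isCoprime_iff_gcd_eq_one.mp hc
  rw [hx]
  exact ⟨Rat.num_div_eq_of_coprime hb hc', Rat.den_div_eq_of_coprime hb hc'⟩

/-- Let `l ≥ 1` and `z₁, …, z_l` be integers with `z₁ ≥ 0` and `z_j ≥ 1` for `2 ≤ j ≤ l`
(here `0`-indexed: `0 ≤ z 0` and `1 ≤ z j` for `1 ≤ j < l`). Writing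
`cf(z₁, …, z_l) = p/q` and `cf(z₁, …, z_l, 1) = r/s` in lowest terms with `q, s ≥ 1`,
the points `⟨cf(z₁, …, z_l, j)⟩` for `j = 1, 2, 3, …` all lie on the single line through
`(1, p/q)` with slope `(ps − qr)/q`. -/
theorem vertices_on_a_line (l : ℕ) (z : ℕ → ℤ) (hl : 1 ≤ l)
    (h0 : 0 ≤ z 0) (hpos : ∀ j, 1 ≤ j → j < l → 1 ≤ z j)
    (p r : ℤ) (q s : ℤ)
    (hp : p = (cf ((List.range l).map z)).num)
    (hq : q = ((cf ((List.range l).map z)).den : ℤ))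
    (hr : r = (cf ((List.range l).map z ++ [1])).num)
    (hs : s = ((cf ((List.range l).map z ++ [1])).den : ℤ)) :
    ∀ j : ℤ, 1 ≤ j →
      (vertexPoint (cf ((List.range l).map z ++ [j]))).2 - (p : ℚ) / (q : ℚ) =
        ((p * s - q * r : ℤ) : ℚ) / (q : ℚ) *
          ((vertexPoint (cf ((List.range l).map z ++ [j]))).1 - 1) := by
  obtain ⟨k, rfl⟩ : ∃ k, l = k + 1 := ⟨l - 1, by omega⟩
  have hL : (List.range (k + 1)).map z = z 0 :: ((List.range k).map (fun i => z (i + 1))) := by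
    rw [List.range_succ_eq_map]
    simp [Function.comp_def]
  rw [hL] at hp hq hr hs ⊢
  obtain ⟨P, Q, P', Q', hP, hQ, hP', hQ', -, hdet, hcf, hj⟩ :=
    cf_matrix ((List.range k).map (fun i => z (i + 1))) (z 0) h0 (by
      intro m hm
      simp only [List.mem_map, List.mem_range] at hm
      obtain ⟨i, hi, rfl⟩ := hm
      exact hpos _ (by omega) (by omega))
  intro j h1
  have key : ∀ j : ℤ, 1 ≤ j → 0 < j * Q + Q' := fun j h1 => by
    have : 0 < j * Q := by positivity
    omega
  obtain ⟨e1, e2⟩ := num_den_aux P Q ((P * Q' - P' * Q) * Q') (-(P * Q' - P' * Q) * P') hQ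
    (by linear_combination hdet) _ hcf
  have gen : ∀ j : ℤ, 1 ≤ j → _ := fun j h1 =>
    num_den_aux (j * P + P') (j * Q + Q') (-(P * Q' - P' * Q) * Q) ((P * Q' - P' * Q) * P)
      (key j h1) (by linear_combination hdet) _ (hj j h1)
  obtain ⟨e3, e4⟩ := gen 1 le_rfl
  obtain ⟨-, e5⟩ := gen j h1
  have e5' : ((cf (z 0 :: ((List.range k).map (fun i => z (i + 1))) ++ [j])).den : ℚ)
      = ((j * Q + Q' : ℤ) : ℚ) := by exact_mod_cast congrArg (Int.cast : ℤ → ℚ) e5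
  rw [e1] at hp
  rw [e2] at hq
  rw [e3] at hr
  rw [e4] at hs
  subst hp hq hr hs
  have hQ0 : (q : ℚ) ≠ 0 := by exact_mod_cast hQ.ne'
  have hD : ((j * q + Q' : ℤ) : ℚ) ≠ 0 := by exact_mod_cast (key j h1).ne'
  simp only [vertexPoint]
  rw [e5', hj j h1]
  push_cast at hD ⊢
  field_simp
  ring
end

section
/- Let N ≥ 1 and let R_1, …, R_N be rational numbers, none of which is an integer. Then there exist integers i_1, …, i_N with i_1 + i_2 + ⋯ + i_N = 0 such that, setting R′_j = R_j + i_j for each j, either (A) all of R′_1, …, R′_N are positive or all of them are negative, or (B) among R′_1, …, R′_N there occur both a positive and a negative number, and |R′_j| < 1 holds for every j. -/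
/-- Normalization of tuples of non-integral rational tangle fractions: if `N ≥ 1` and
`R₁, …, R_N` are rational numbers, none of which is an integer, then there are integers
`i₁, …, i_N` summing to `0` such that, with `R′_j = R_j + i_j`, either (A) all the `R′_j`
have a common sign, or (B) both signs occur among the `R′_j` and `|R′_j| < 1` for all `j`. -/
theorem montesinos_normalization (N : ℕ) (hN : 1 ≤ N) (R : Fin N → ℚ)
    (hR : ∀ j, ¬ ∃ n : ℤ, R j = (n : ℚ)) :
    ∃ i : Fin N → ℤ, (∑ j, i j) = 0 ∧
      (((∀ j, 0 < R j + (i j : ℚ)) ∨ (∀ j, R j + (i j : ℚ) < 0)) ∨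
       ((∃ j, 0 < R j + (i j : ℚ)) ∧ (∃ j, R j + (i j : ℚ) < 0) ∧
        ∀ j, |R j + (i j : ℚ)| < 1)) := by
  have hpos : ∀ j, 0 < R j - (⌊R j⌋ : ℚ) := fun j => by
    have h := Int.floor_le (R j)
    rcases h.lt_or_eq with h | h
    · linarith
    · exact absurd ⟨_, h.symm⟩ (hR j)
  have hlt : ∀ j, R j - (⌊R j⌋ : ℚ) < 1 := fun j => by
    have h := Int.lt_floor_add_one (R j)
    linarith
  obtain ⟨S, hS⟩ : ∃ S, S = ∑ j, ⌊R j⌋ := ⟨_, rfl⟩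
  let j0 : Fin N := ⟨0, hN⟩
  by_cases h0 : 0 ≤ S
  · refine ⟨fun j => -⌊R j⌋ + (if j = j0 then S else 0), ?_, Or.inl (Or.inl fun j => ?_)⟩
    · simp [Finset.sum_add_distrib, hS]
    · have h1 := hpos j
      have h2 : (0 : ℚ) ≤ S := by exact_mod_cast h0
      by_cases hj : j = j0
      · simp only [if_pos hj]; push_cast; linarith
      · simp only [if_neg hj]; push_cast; linarith
  by_cases h1 : S ≤ -(N : ℤ)
  · refine ⟨fun j => -⌊R j⌋ + (-1) + (if j = j0 then S + N else 0), ?_,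
      Or.inl (Or.inr fun j => ?_)⟩
    · simp [Finset.sum_add_distrib, hS]
      ring
    · have h3 := hlt j
      have h2 : (S : ℚ) + N ≤ 0 := by
        have : S + (N : ℤ) ≤ 0 := by omega
        exact_mod_cast this
      by_cases hj : j = j0
      · simp only [if_pos hj]; push_cast; linarith
      · simp only [if_neg hj]; push_cast; linarith
  obtain ⟨s, -, hs⟩ := Finset.exists_subset_card_eq
    (s := (Finset.univ : Finset (Fin N))) (n := S.natAbs) (by simp; omega)
  have hin : ∃ j, j ∈ s := by
    apply Finset.card_pos.mp; omega
  have hout : ∃ j, j ∉ s := by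
    by_contra! h
    have : s = Finset.univ := Finset.eq_univ_iff_forall.mpr h
    rw [this] at hs
    simp at hs
    omega
  refine ⟨fun j => -⌊R j⌋ + (if j ∈ s then -1 else 0), ?_, Or.inr ⟨?_, ?_, fun j => ?_⟩⟩
  · rw [Finset.sum_add_distrib, Finset.sum_neg_distrib, ← hS]
    rw [Finset.sum_ite_mem, Finset.univ_inter, Finset.sum_const, hs, nsmul_eq_mul]
    omega
  · obtain ⟨j, hj⟩ := hout
    have := hpos j
    refine ⟨j, ?_⟩
    simp only [if_neg hj]; push_cast; linarith
  · obtain ⟨j, hj⟩ := hin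
    have := hlt j
    refine ⟨j, ?_⟩
    simp only [if_pos hj]; push_cast; linarith
  · have h3 := hpos j
    have h4 := hlt j
    rw [abs_lt]
    by_cases hj : j ∈ s
    · simp only [if_pos hj]; push_cast; constructor <;> linarith
    · simp only [if_neg hj]; push_cast; constructor <;> linarith
end
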